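/- arXiv:1305.4139 — 2 statements merged into one kernel-verified Lean document; each statement's English description precedes it below -/
import Mathlib

section
/- Let G be a finite group such that for every 2-element x of G, the index |G : C_G(x)| is odd. Then the Sylow 2-subgroups of G are abelian. -/
/-! An element `w` that is conjugate to its inverse and whose class has odd size satisfies
`w ^ 2 = 1`, since the involution `g ↦ g⁻¹` has a fixed point on a set of odd size. If `u` and `v`
are involutions of a 2-group, then `u` inverts `u * v` by conjugation; hence `(u * v) ^ 2 = 1`, so
`u` and `v` commute.

Now let `x` and `z` lie in a 2-subgroup `Q`, with `x ^ 2` commuting with `z`. The 2-group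
`Q ∩ C_G(x ^ 2)` contains `x` and `z` and acts on the conjugates of `x` under `C_G(x ^ 2)`, whose
number is odd, so it fixes one of them, `y` say. As `y` commutes with `x` and `y ^ 2 = x ^ 2`, the
element `w = x * y⁻¹` satisfies `w ^ 2 = 1`, and as `y` commutes with `z`, so does `x = w * y` as
soon as `w` does. Induction on the order of `x` settles first the case where `z` is an involution,
and from it the general one. -/

open Subgroup

section OddClass

variable {G : Type*} [Group G] {u v w : G}

theorem index_centralizer_singleton_eq_ncard_conjugatesOf (g : G) :
    (centralizer {g}).index = (conjugatesOf g).ncard := by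
  have orbit_eq : MulAction.orbit (ConjAct G) g = conjugatesOf g :=
    Set.ext fun _ => ConjAct.mem_orbit_conjAct.trans isConj_comm
  rw [← orbit_eq, ← MulAction.index_stabilizer, centralizer_eq_comap_stabilizer]
  exact index_comap_of_surjective _ ConjAct.toConjAct.surjective

theorem exists_mem_isFixedPt_of_odd_ncard {α : Type*} {f : α → α} (hf : f.Involutive)
    {s : Set α} (hfs : Set.MapsTo f s s) (hs : Odd s.ncard) : ∃ a ∈ s, f.IsFixedPt a := by
  have := (Set.finite_of_ncard_pos hs.pos).fintype
  let σ : Equiv.Perm s := Function.Involutive.toPerm (hfs.restrict f s s) fun a =>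
    Subtype.ext (hf a)
  have hσ : σ ^ 2 ^ 1 = 1 := by
    ext a
    exact hf a
  obtain ⟨a, ha⟩ := σ.exists_fixed_point_of_prime (p := 2)
    (by rw [← Nat.card_eq_fintype_card]; exact hs.not_two_dvd_nat) hσ
  exact ⟨a, a.2, congrArg Subtype.val ha⟩

theorem sq_eq_one_of_isConj_inv (hw : Odd (centralizer {w}).index) (hinv : IsConj w w⁻¹) :
    w ^ 2 = 1 := by
  have inv_mem : Set.MapsTo (·⁻¹) (conjugatesOf w) (conjugatesOf w) := by
    intro g hg
    obtain ⟨c, rfl⟩ := isConj_iff.1 hg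
    exact hinv.trans (isConj_iff.2 ⟨c, conj_inv.symm⟩)
  rw [index_centralizer_singleton_eq_ncard_conjugatesOf] at hw
  obtain ⟨g, hg, hgg⟩ := exists_mem_isFixedPt_of_odd_ncard inv_involutive inv_mem hw
  obtain ⟨c, rfl⟩ := isConj_iff.1 hg
  have sq_conj : (c * w * c⁻¹) ^ 2 = 1 := by
    rw [sq]
    nth_rw 1 [← hgg.eq]
    exact inv_mul_cancel _
  simpa [conj_pow] using sq_conj

theorem commute_of_sq_eq_one (huv : Odd (centralizer {u * v}).index)
    (hu : u ^ 2 = 1) (hv : v ^ 2 = 1) : Commute u v := by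
  have hu_inv : u⁻¹ = u := inv_eq_of_mul_eq_one_left (by rw [← sq, hu])
  have hv_inv : v⁻¹ = v := inv_eq_of_mul_eq_one_left (by rw [← sq, hv])
  have conj_eq : u * (u * v) * u⁻¹ = (u * v)⁻¹ :=
    calc u * (u * v) * u⁻¹ = u ^ 2 * v * u⁻¹ := by rw [sq, mul_assoc u u v]
      _ = (u * v)⁻¹ := by rw [hu, one_mul, mul_inv_rev, hv_inv]
  have mul_sq := sq_eq_one_of_isConj_inv huv (isConj_iff.2 ⟨u, conj_eq⟩)
  rwa [sq, mul_eq_one_iff_eq_inv, mul_inv_rev, hu_inv, hv_inv] at mul_sq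

end OddClass

section PSubgroup

variable {G : Type*} [Group G] {p : ℕ} {D : Subgroup G}

theorem exists_forall_conj_mem_of_not_dvd_index [Fact p.Prime] (hD : IsPGroup p D)
    {K : Subgroup G} (hK : ¬ p ∣ K.index) : ∃ g, ∀ d ∈ D, g⁻¹ * d * g ∈ K := by
  obtain ⟨q, hq⟩ := hD.nonempty_fixed_point_of_prime_not_dvd_card (G ⧸ K) hK
  obtain ⟨g, rfl⟩ := QuotientGroup.mk_surjective q
  refine ⟨g, fun d hd => ?_⟩
  rw [mul_assoc]
  exact QuotientGroup.eq.1 (hq ⟨d, hd⟩).symm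

theorem exists_conj_pow_eq_le_centralizer [Fact p.Prime] (hD : IsPGroup p D) {x : G} {k : ℕ}
    (hDx : D ≤ centralizer {x ^ k}) (hx : ¬ p ∣ (centralizer {x}).index) :
    ∃ g, (g * x * g⁻¹) ^ k = x ^ k ∧ D ≤ centralizer {g * x * g⁻¹} := by
  have centralizer_le : centralizer {x} ≤ centralizer {x ^ k} := fun g hg =>
    mem_centralizer_singleton_iff.2 (Commute.pow_right (mem_centralizer_singleton_iff.1 hg) k)
  obtain ⟨⟨g, hg⟩, hgD⟩ := exists_forall_conj_mem_of_not_dvd_index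
    (hD.comap_subtype (K := centralizer {x ^ k}))
    (mt (·.trans (relIndex_dvd_index_of_le centralizer_le)) hx)
  refine ⟨g, ?_, fun d hd => mem_centralizer_singleton_iff.2 ?_⟩
  · rw [conj_pow, mem_centralizer_singleton_iff.1 hg, mul_inv_cancel_right]
  · have conj_mem : g⁻¹ * d * g ∈ centralizer {x} := hgD ⟨d, hDx hd⟩ hd
    have conj_commute : Commute (g * (g⁻¹ * d * g) * g⁻¹) (g * x * g⁻¹) :=
      (Commute.conj_iff g).2 (mem_centralizer_singleton_iff.1 conj_mem)
    simpa only [mul_assoc, mul_inv_cancel_left, mul_inv_cancel, mul_one] using conj_commute.eq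

theorem isPGroup_sup_zpowers_of_le_centralizer (hD : IsPGroup p D) {y : G}
    (hy : IsPGroup p (zpowers y)) (hDy : D ≤ centralizer {y}) :
    IsPGroup p (D ⊔ zpowers y : Subgroup G) := by
  refine hD.to_sup_of_normal_right' hy (hDy.trans ?_)
  rw [← centralizer_closure, ← zpowers_eq_closure]
  exact centralizer_le_normalizer _

end PSubgroup

section TwoElements

variable {G : Type*} [Group G] {x z : G}

theorem commute_of_commute_sq (hx : Odd (centralizer {x}).index)
    (hz : ∀ P : Subgroup G, IsPGroup 2 P → z ∈ P → ∀ w ∈ P, w ^ 2 = 1 → Commute w z)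
    {Q : Subgroup G} (hQ : IsPGroup 2 Q) (hzQ : z ∈ Q) (hxQ : x ∈ Q)
    (hxz : Commute (x ^ 2) z) : Commute x z := by
  let D := Q ⊓ centralizer {x ^ 2}
  have hD : IsPGroup 2 D := hQ.to_le inf_le_left
  have hxD : x ∈ D := ⟨hxQ, mem_centralizer_singleton_iff.2 (Commute.self_pow x 2)⟩
  have hzD : z ∈ D := ⟨hzQ, mem_centralizer_singleton_iff.2 hxz.symm⟩
  obtain ⟨g, hsq, hDy⟩ := exists_conj_pow_eq_le_centralizer hD inf_le_right hx.not_two_dvd_nat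
  set y := g * x * g⁻¹
  have hxy : Commute x y := mem_centralizer_singleton_iff.1 (hDy hxD)
  have hzy : Commute z y := mem_centralizer_singleton_iff.1 (hDy hzD)
  have hy : IsPGroup 2 (zpowers y) := by
    have := (hQ.to_le (zpowers_le.2 hxQ)).map (MulAut.conj g).toMonoidHom
    rwa [MonoidHom.map_zpowers] at this
  have hw : (x * y⁻¹) ^ 2 = 1 := by rw [hxy.inv_right.mul_pow, inv_pow, hsq, mul_inv_cancel]
  have hwz : Commute (x * y⁻¹) z :=
    hz (D ⊔ zpowers y) (isPGroup_sup_zpowers_of_le_centralizer hD hy hDy) (mem_sup_left hzD)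
      _ (mul_mem (mem_sup_left hxD) (inv_mem (mem_sup_right (mem_zpowers y)))) hw
  simpa only [inv_mul_cancel_right] using hwz.mul_left hzy.symm

theorem commute_of_forall_sq_eq_one_commute
    (hodd : ∀ P : Subgroup G, IsPGroup 2 P → ∀ x ∈ P, Odd (centralizer {x}).index)
    (hz : ∀ P : Subgroup G, IsPGroup 2 P → z ∈ P → ∀ w ∈ P, w ^ 2 = 1 → Commute w z)
    {Q : Subgroup G} (hQ : IsPGroup 2 Q) (hzQ : z ∈ Q) (hxQ : x ∈ Q) : Commute x z := by
  obtain ⟨n, hn⟩ := hQ ⟨x, hxQ⟩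
  replace hn : x ^ 2 ^ n = 1 := congrArg Subtype.val hn
  induction n generalizing x with
  | zero =>
    obtain rfl : x = 1 := by simpa only [pow_zero, pow_one] using hn
    exact Commute.one_left z
  | succ n ih =>
    refine commute_of_commute_sq (hodd Q hQ x hxQ) hz hQ hzQ hxQ (ih (pow_mem hxQ 2) ?_)
    rw [← pow_mul, ← pow_succ', hn]

end TwoElements

/-- As an infinite index is `0`, hence even, the hypothesis makes the classes of 2-elements
finite. -/
theorem camina_herzog_general {G : Type*} [Group G]
    (h : ∀ x : G, (∃ n : ℕ, orderOf x = 2 ^ n) → Odd (Subgroup.centralizer {x}).index)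
    {Q : Subgroup G} (hQ : IsPGroup 2 Q) : ∀ a b : Q, a * b = b * a := by
  have hodd (P : Subgroup G) (hP : IsPGroup 2 P) (x : G) (hx : x ∈ P) :
      Odd (centralizer {x}).index :=
    h x (by simpa only [orderOf_mk] using hP.exists_orderOf_eq_pow ⟨x, hx⟩)
  have commute_involution (P : Subgroup G) (hP : IsPGroup 2 P) {x w : G} (hx : x ∈ P)
      (hw : w ∈ P) (hw2 : w ^ 2 = 1) : Commute x w :=
    commute_of_forall_sq_eq_one_commute hodd
      (fun R hR hwR v hv hv2 => commute_of_sq_eq_one (hodd R hR _ (mul_mem hv hwR)) hv2 hw2)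
      hP hw hx
  rintro ⟨a, ha⟩ ⟨b, hb⟩
  exact Subtype.ext <| commute_of_forall_sq_eq_one_commute hodd
    (fun P hP hbP _ hw hw2 => (commute_involution P hP hbP hw hw2).symm) hQ hb ha

/-- Camina–Herzog: if `|G : C_G(x)|` is odd for every 2-element `x` of a finite
group `G`, then the Sylow 2-subgroups of `G` are abelian. -/
theorem camina_herzog (G : Type*) [Group G] [Finite G]
    (h : ∀ x : G, (∃ n : ℕ, orderOf x = 2 ^ n) → Odd (Subgroup.centralizer {x}).index)
    (S : Sylow 2 G) : ∀ a b : (S : Subgroup G), a * b = b * a :=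
  camina_herzog_general h S.isPGroup'
end

section
/- Let G be a finite group with Sylow 2-subgroup S, and suppose every 2-element of G is G-conjugate to an element of Z(S). If U = Ω₁(S) denotes the subgroup generated by the involutions of S and U is abelian and strongly closed in S with respect to G, then U is contained in Z(S). -/
/-!
Let `s ∈ S` be conjugate to an element of the center of `S`, so that the centralizer of `s`
contains a Sylow subgroup of `G`. By Sylow's theorem in that centralizer, some Sylow subgroup `P`
contains both `U ∩ C(s)` and a conjugate `U'` of `U` that centralizes `s`. Strong closure gives
`U ∩ C(s) ≤ U'`, and `U'` is abelian, so `U'` centralizes `B = ⟨s, U ∩ C(s)⟩`.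

If `K ≤ U` satisfies `[K, s] ≤ C(s)`, then `K` normalizes `B`. Sylow's theorem in `N(B)` puts `K`
and an `N(B)`-conjugate of `U'` into one Sylow subgroup of `G`. By strong closure `K` lies in this
conjugate, which still centralizes `B`; hence `K` centralizes `s`. Taking for `K` the intersections
of `U` with the terms of the upper central series of `S`, one concludes by induction.
-/

open Subgroup MulAut
open scoped Pointwise commutatorElement

section StronglyClosed

variable {G : Type*} [Group G]

/-- `U` is strongly closed in `S` with respect to the ambient group: `S` contains no conjugate of
an element of `U` other than those lying in `U`. The usual requirement `U ≤ S` is kept separate. -/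
def IsStronglyClosed (U S : Subgroup G) : Prop :=
  ∀ u ∈ U, ∀ g : G, g⁻¹ * u * g ∈ S → g⁻¹ * u * g ∈ U

theorem IsStronglyClosed.conj_mem {U S : Subgroup G} (hsc : IsStronglyClosed U S) {u g : G}
    (hu : u ∈ U) (hg : g * u * g⁻¹ ∈ S) : g * u * g⁻¹ ∈ U := by
  simpa only [inv_inv] using hsc u hu g⁻¹ (by simpa only [inv_inv] using hg)

theorem IsStronglyClosed.conj_smul_le {U S : Subgroup G} (hsc : IsStronglyClosed U S) {g : G}
    (hg : conj g • U ≤ S) : conj g • U ≤ U := by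
  rintro _ ⟨u, hu, rfl⟩
  exact hsc.conj_mem hu (hg (smul_mem_pointwise_smul u (conj g) U hu))

end StronglyClosed

section Centralizer

variable {G : Type*} [Group G]

theorem le_normalizer_closure_insert {K D : Subgroup G} {s : G} (hD : K ≤ centralizer D)
    (hs : ∀ k ∈ K, ⁅k, s⁆ ∈ D) : K ≤ normalizer (closure (insert s (D : Set G))) := by
  refine le_normalizer_closure_iff.mpr fun k hk x hx => ?_
  have hDB : (D : Set G) ⊆ closure (insert s (D : Set G)) :=
    (Set.subset_insert s _).trans subset_closure
  rcases hx with rfl | hx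
  · rw [← conj_apply, conj_eq_commutatorElement_mul]
    exact mul_mem (hDB (hs k hk)) (subset_closure (Set.mem_insert _ _))
  · rw [← mem_centralizer_iff.mp (hD hk) x hx, mul_inv_cancel_right]
    exact hDB hx

theorem conj_smul_centralizer_le {B : Set G} {n : G} (hn : n ∈ normalizer B) :
    conj n • centralizer B ≤ centralizer B := by
  rintro _ ⟨c, hc, rfl⟩
  exact (normal_subgroupOf_iff (centralizer_le_normalizer B)).mp inferInstance c n hc hn

theorem conj_smul_le_centralizer_singleton {H : Subgroup G} {s g : G}
    (hg : g⁻¹ * s * g ∈ centralizer (H : Set G)) : conj g • H ≤ centralizer {s} := by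
  rintro _ ⟨h, hh, rfl⟩
  have hcomm : Commute (conj g h) (conj g (g⁻¹ * s * g)) :=
    Commute.map (mem_centralizer_iff.mp hg h hh) (conj g)
  rw [mem_centralizer_singleton_iff]
  simpa [mul_assoc] using hcomm.eq

end Centralizer

section Sylow

variable {G : Type*} [Group G] {p : ℕ} [Fact p.Prime] [Finite (Sylow p G)]

theorem exists_sylow_ge_and_conj_smul_le {N H K : Subgroup G} (hH : IsPGroup p H)
    (hK : IsPGroup p K) (hHN : H ≤ N) (hKN : K ≤ N) :
    ∃ n ∈ N, ∃ P : Sylow p G, H ≤ P ∧ conj n • K ≤ P := by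
  obtain ⟨Q, hQ⟩ := (hH.comap_of_injective N.subtype N.subtype_injective).exists_le_sylow
  obtain ⟨R, hR⟩ := (hK.comap_of_injective N.subtype N.subtype_injective).exists_le_sylow
  obtain ⟨n, rfl⟩ := MulAction.exists_smul_eq N R Q
  obtain ⟨P, hP⟩ := ((n • R).isPGroup'.map N.subtype).exists_le_sylow
  refine ⟨n, n.2, P, fun h hh => hP ⟨⟨h, hHN hh⟩, hQ hh, rfl⟩, ?_⟩
  rintro _ ⟨k, hk, rfl⟩
  have hkR : (⟨k, hKN hk⟩ : N) ∈ (R : Subgroup N) := hR hk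
  exact hP ⟨_, smul_mem_pointwise_smul _ (conj n) _ hkR, rfl⟩

theorem exists_pow_succ_mem_normalizer_sylow (S : Sylow p G) (g : G) :
    ∃ m : ℕ, g ^ (m + 1) ∈ normalizer (S : Set G) := by
  have hindex : (normalizer (S : Set G)).index ≠ 0 := by
    rw [← S.card_eq_index_normalizer]
    exact Nat.card_pos.ne'
  obtain ⟨m, hm, -, hgm⟩ := exists_pow_mem_of_index_ne_zero hindex g
  exact ⟨m - 1, by rwa [Nat.sub_add_cancel hm]⟩

variable {S : Sylow p G} {U : Subgroup G}

theorem IsStronglyClosed.conj_smul_eq (hsc : IsStronglyClosed U S) (hUS : U ≤ S) {g : G}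
    (hg : conj g • U ≤ S) : conj g • U = U := by
  have hgU : conj g • U ≤ U := hsc.conj_smul_le hg
  -- A power of `g` normalizes `S`, hence `U`; so the chain `U ≥ U^g ≥ U^(g²) ≥ …` returns to `U`.
  obtain ⟨m, hm⟩ := exists_pow_succ_mem_normalizer_sylow S g
  have hpow : conj (g ^ (m + 1))⁻¹ • U ≤ U := by
    refine hsc.conj_smul_le ?_
    calc conj (g ^ (m + 1))⁻¹ • U ≤ conj (g ^ (m + 1))⁻¹ • (S : Subgroup G) := smul_mono_right _ hUS
      _ = S := congrArg Sylow.toSubgroup (Sylow.smul_eq_iff_mem_normalizer.mpr (inv_mem hm))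
  refine hgU.antisymm ?_
  calc U ≤ conj (g ^ (m + 1)) • U := by rwa [subset_pointwise_smul_iff, ← map_inv]
    _ = conj g • conj g ^ m • U := by rw [map_pow, pow_succ', mul_smul]
    _ ≤ conj g • U := smul_mono_right _ (pow_smul_le hgU m)

theorem IsStronglyClosed.inf_sylow_le_conj_smul (hsc : IsStronglyClosed U S) (hUS : U ≤ S)
    (P : Sylow p G) {g : G} (hg : conj g • U ≤ P) : U ⊓ P ≤ conj g • U := by
  obtain ⟨x, rfl⟩ := MulAction.exists_smul_eq G P S
  have hxg : conj (x * g) • U = U := hsc.conj_smul_eq hUS <| by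
    rw [map_mul, mul_smul]
    exact smul_mono_right _ hg
  rintro d ⟨hdU, hdP⟩
  have hxd : conj x • d ∈ conj x • conj g • U := by
    rw [← mul_smul, ← map_mul, hxg]
    exact hsc.conj_mem hdU (smul_mem_pointwise_smul d (conj x) _ hdP)
  exact smul_mem_pointwise_smul_iff.mp hxd

theorem IsStronglyClosed.exists_conj_smul_le_centralizer (hsc : IsStronglyClosed U S)
    (hUS : U ≤ S) (hab : U ≤ centralizer U) {s : G} (Q : Sylow p G) (hQ : Q ≤ centralizer {s}) :
    ∃ g : G, conj g • U ≤ centralizer (insert s (U ⊓ centralizer {s} : Subgroup G)) := by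
  obtain ⟨x, rfl⟩ := MulAction.exists_smul_eq G S Q
  obtain ⟨y, hy, P, hDP, hSP⟩ := exists_sylow_ge_and_conj_smul_le
    (S.isPGroup'.to_le (inf_le_left.trans hUS)) (x • S).isPGroup'
    (inf_le_right : U ⊓ centralizer {s} ≤ _) hQ
  have hsmul : conj (y * x) • U ≤ conj y • conj x • (S : Subgroup G) := by
    rw [map_mul, mul_smul]
    exact smul_mono_right _ (smul_mono_right _ hUS)
  have hDU : U ⊓ centralizer {s} ≤ conj (y * x) • U :=
    (le_inf inf_le_left hDP).trans (hsc.inf_sylow_le_conj_smul hUS P (hsmul.trans hSP))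
  have hsU : conj (y * x) • U ≤ centralizer {s} :=
    hsmul.trans (conj_smul_le_of_le hQ ⟨y, hy⟩)
  refine ⟨y * x, fun u hu => mem_centralizer_iff.mpr ?_⟩
  rintro d (rfl | hd)
  · exact mem_centralizer_iff.mp (hsU hu) d rfl
  · obtain ⟨v, hv, rfl⟩ := hu
    obtain ⟨w, hw, rfl⟩ := hDU hd
    exact (Commute.map (hab hv w hw) (conj (y * x))).eq

theorem IsStronglyClosed.le_centralizer_of_commutator_mem (hsc : IsStronglyClosed U S)
    (hUS : U ≤ S) (hab : U ≤ centralizer U) {s : G} (Q : Sylow p G) (hQ : Q ≤ centralizer {s})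
    {K : Subgroup G} (hKU : K ≤ U) (hK : ∀ k ∈ K, ⁅k, s⁆ ∈ U ⊓ centralizer {s}) :
    K ≤ centralizer {s} := by
  obtain ⟨g, hg⟩ := hsc.exists_conj_smul_le_centralizer hUS hab Q hQ
  set B := closure (insert s ((U ⊓ centralizer {s} : Subgroup G) : Set G))
  rw [← centralizer_closure] at hg
  have hKB : K ≤ normalizer (B : Set G) := le_normalizer_closure_insert
    ((hKU.trans hab).trans (centralizer_le inf_le_left)) hK
  have hUp : IsPGroup p U := S.isPGroup'.to_le hUS
  obtain ⟨n, hn, P, hKP, hUP⟩ := exists_sylow_ge_and_conj_smul_le (hUp.to_le hKU)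
    (hUp.of_equiv (equivSMul (conj g) U)) hKB
    (hg.trans (centralizer_le_normalizer _))
  have hUB : conj (n * g) • U ≤ centralizer B := by
    rw [map_mul, mul_smul]
    exact (smul_mono_right _ hg).trans (conj_smul_centralizer_le hn)
  rw [← mul_smul, ← map_mul] at hUP
  calc K ≤ U ⊓ P := le_inf hKU hKP
    _ ≤ conj (n * g) • U := hsc.inf_sylow_le_conj_smul hUS P hUP
    _ ≤ centralizer B := hUB
    _ ≤ centralizer {s} := centralizer_le <|
      Set.singleton_subset_iff.mpr <| subset_closure <| Set.mem_insert _ _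

theorem IsStronglyClosed.inf_upperCentralSeries_le_centralizer (hsc : IsStronglyClosed U S)
    (hUS : U ≤ S) (hab : U ≤ centralizer U)
    (hfus : ∀ s ∈ S, ∃ Q : Sylow p G, Q ≤ centralizer {s}) (n : ℕ) :
    U ⊓ (Subgroup.upperCentralSeries S n).map (S : Subgroup G).subtype ≤ centralizer S := by
  induction n with
  | zero => simp
  | succ n ih =>
    intro u hu
    refine mem_centralizer_iff.mpr fun s hs => ?_
    obtain ⟨Q, hQ⟩ := hfus s hs
    refine (mem_centralizer_singleton_iff.mp
      (hsc.le_centralizer_of_commutator_mem hUS hab Q hQ inf_le_left ?_ hu)).symm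
    rintro _ ⟨hkU, k, hk, rfl⟩
    have hcommU : ⁅(k : G), s⁆ ∈ U := by
      rw [commutatorElement_def, mul_assoc, mul_assoc, ← mul_assoc s]
      refine mul_mem hkU (hsc.conj_mem (inv_mem hkU) ?_)
      exact mul_mem (mul_mem hs (inv_mem k.2)) (inv_mem hs)
    have hcommS : ⁅(k : G), s⁆ ∈ centralizer (S : Set G) :=
      ih ⟨hcommU, ⁅k, ⟨s, hs⟩⁆,
        Subgroup.mem_upperCentralSeries_succ_iff.mp hk ⟨s, hs⟩, rfl⟩
    exact ⟨hcommU, centralizer_le (Set.singleton_subset_iff.mpr hs) hcommS⟩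

theorem omega1_le_center_of_strongly_closed_general [Group.IsNilpotent S]
    (hfus : ∀ x : G, (∃ n : ℕ, orderOf x = p ^ n) →
      ∃ g : G, g⁻¹ * x * g ∈ centralizer (S : Set G) ⊓ S)
    (hUS : U ≤ S) (hab : ∀ u ∈ U, ∀ v ∈ U, Commute u v) (hsc : IsStronglyClosed U S) :
    U ≤ centralizer (S : Set G) ⊓ S := by
  have hcent (s) (hs : s ∈ S) : ∃ Q : Sylow p G, Q ≤ centralizer {s} := by
    obtain ⟨n, hn⟩ := IsPGroup.iff_orderOf.mp S.isPGroup' ⟨s, hs⟩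
    obtain ⟨g, hg, -⟩ := hfus s ⟨n, by rwa [← orderOf_mk s hs]⟩
    exact ⟨g • S, conj_smul_le_centralizer_singleton hg⟩
  obtain ⟨n, hn⟩ := (Group.isNilpotent_iff S).mp inferInstance
  have hcentralizer := hsc.inf_upperCentralSeries_le_centralizer hUS
    (fun u hu v hv => hab v hv u hu) hcent n
  rw [hn, ← MonoidHom.range_eq_map, range_subtype, inf_eq_left.mpr hUS] at hcentralizer
  exact le_inf hcentralizer hUS

end Sylow

/-- If every 2-element of `G` is conjugate into `Z(S)` and `U = Ω₁(S)` is
abelian and strongly closed in `S` with respect to `G`, then `U ≤ Z(S)`. -/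
theorem omega1_le_center_of_strongly_closed
    (G : Type*) [Group G] [Finite G] (S : Sylow 2 G)
    (hfus : ∀ x : G, (∃ n : ℕ, orderOf x = 2 ^ n) →
      ∃ g : G, g⁻¹ * x * g ∈ Subgroup.centralizer ((S : Subgroup G) : Set G) ⊓ S)
    (U : Subgroup G)
    (hU : U = Subgroup.closure {x : G | x ∈ (S : Subgroup G) ∧ x ^ 2 = 1})
    (hab : ∀ u ∈ U, ∀ v ∈ U, Commute u v)
    (hsc : ∀ u ∈ U, ∀ g : G, g⁻¹ * u * g ∈ (S : Subgroup G) → g⁻¹ * u * g ∈ U) :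
    U ≤ Subgroup.centralizer ((S : Subgroup G) : Set G) ⊓ S := by
  have := S.isPGroup'.isNilpotent
  exact omega1_le_center_of_strongly_closed_general hfus
    (hU ▸ (closure_le _).mpr fun _ hx => hx.1) hab hsc
end
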